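/- arXiv:math/0605126 — 2 statements merged into one kernel-verified Lean document; each statement's English description precedes it below -/
import Mathlib

section
/- Let q be a prime power, V an n-dimensional vector space over the finite field 𝔽_q, K a field of characteristic zero, and t ∈ K. Then ∑_{U ≤ V} μ(U, ⊤)·t^{finrank U} = ∏_{i=0}^{n−1} (t − q^i), where the sum runs over all 𝔽_q-subspaces U of V and μ is the Möbius function of the lattice of subspaces of V. -/
open Module

/-!
Let `q = #F` and `n = dim V`. Every `m`-tuple of vectors of `V` spans exactly one subspace, and
`(q ^ m) ^ dim U` of these tuples lie in `U`. By Möbius inversion the characteristic polynomial at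
`q ^ m` is therefore the number of spanning `m`-tuples. Read as an `m × n` matrix, such a tuple has
rank `n`, so its columns are `n` linearly independent vectors of `F ^ m`, and these can be chosen
one by one in `∏ i < n, (q ^ m - q ^ i)` ways. Both sides are thus polynomials with the same values
at the infinitely many points `q ^ m`.
-/

theorem natCard_le_eq_sum_Iic_natCard_eq {α β : Type*} [Finite α] [PartialOrder β]
    [LocallyFiniteOrderBot β] (f : α → β) (x : β) :
    Nat.card {a // f a ≤ x} = ∑ y ∈ Finset.Iic x, Nat.card {a // f a = y} := by
  classical
  have := Fintype.ofFinite α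
  simp only [Nat.card_eq_fintype_card, Fintype.card_subtype]
  rw [Finset.card_eq_sum_card_fiberwise (f := f) (t := Finset.Iic x) fun a ha ↦ by simpa using ha]
  refine Finset.sum_congr rfl fun y hy ↦ ?_
  rw [Finset.filter_filter]
  congr! 2 with a
  exact and_iff_right_of_imp fun h ↦ h.trans_le (Finset.mem_Iic.mp hy)

theorem sum_Iic_mu_mul_natCard_le {α β : Type*} [Finite α] [PartialOrder β] [OrderBot β]
    [LocallyFiniteOrder β] [DecidableEq β] (f : α → β) (x : β) :
    ∑ y ∈ Finset.Iic x, IncidenceAlgebra.mu ℤ y x * Nat.card {a // f a ≤ y} =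
      Nat.card {a // f a = x} :=
  (IncidenceAlgebra.moebius_inversion_bot (fun y ↦ (Nat.card {a // f a = y} : ℤ))
    (fun y ↦ (Nat.card {a // f a ≤ y} : ℤ))
    (fun y ↦ mod_cast natCard_le_eq_sum_Iic_natCard_eq f y) x).symm

theorem span_range_eq_top_iff_linearIndependent_coords {F V ι κ : Type*} [Field F]
    [AddCommGroup V] [Module F V] [Finite κ] (b : Basis κ F V) (v : ι → V) :
    Submodule.span F (Set.range v) = ⊤ ↔ LinearIndependent F fun j i ↦ b.equivFun (v i) j := by
  rw [← span_flip_eq_top_iff_linearIndependent,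
    ← Submodule.map_eq_top_iff (e := b.equivFun), Submodule.map_span, ← Set.range_comp]
  rfl

theorem intCast_natCard_linearIndependent {F W : Type*} [Field F] [Fintype F] [AddCommGroup W]
    [Module F W] [FiniteDimensional F W] (k : ℕ) :
    (Nat.card {s : Fin k → W // LinearIndependent F s} : ℤ) =
      ∏ i ∈ Finset.range k, ((Fintype.card F : ℤ) ^ finrank F W - (Fintype.card F : ℤ) ^ i) := by
  have : Finite W := Module.finite_of_finite F
  have := Fintype.ofFinite W
  obtain hk | hk := le_or_gt k (finrank F W)
  · rw [card_linearIndependent hk, Finset.prod_range, Nat.cast_prod]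
    refine Finset.prod_congr rfl fun i _ ↦ ?_
    rw [Nat.cast_sub (Nat.pow_le_pow_right Fintype.card_pos (i.isLt.le.trans hk))]
    simp only [Nat.cast_pow]
  · have : IsEmpty {s : Fin k → W // LinearIndependent F s} :=
      ⟨fun s ↦ hk.not_ge (by simpa using s.2.fintype_card_le_finrank)⟩
    rw [Nat.card_of_isEmpty, Nat.cast_zero]
    exact (Finset.prod_eq_zero (Finset.mem_range.mpr hk) (sub_self _)).symm

theorem polynomial_eq_of_forall_eval_pow_eq {R : Type*} [CommRing R] [IsDomain R] {a : R}
    (ha : Function.Injective fun m : ℕ ↦ a ^ m) {P Q : Polynomial R}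
    (h : ∀ m : ℕ, P.eval (a ^ m) = Q.eval (a ^ m)) : P = Q :=
  Polynomial.eq_of_infinite_eval_eq P Q
    ((Set.infinite_range_of_injective ha).mono (Set.range_subset_iff.mpr h))

section FiniteField

variable (F V : Type*) [Field F] [Fintype F] [AddCommGroup V] [Module F V]

variable {F V} in
theorem natCard_span_range_le (ι : Type*) [Fintype ι] (U : Submodule F V)
    [FiniteDimensional F U] :
    Nat.card {v : ι → V // Submodule.span F (Set.range v) ≤ U} =
      (Fintype.card F ^ Fintype.card ι) ^ finrank F U := by
  have hle (v : ι → V) : Submodule.span F (Set.range v) ≤ U ↔ ∀ i, v i ∈ U :=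
    Submodule.span_le.trans Set.range_subset_iff
  calc
    _ = Nat.card (ι → U) :=
      Nat.card_congr ((Equiv.subtypeEquivRight hle).trans Equiv.subtypePiEquivPi)
    _ = _ := by
      rw [Nat.card_fun, natCard_eq_pow_finrank (K := F), Nat.card_eq_fintype_card,
        Nat.card_eq_fintype_card, pow_right_comm]

variable [FiniteDimensional F V]

theorem intCast_natCard_span_range_eq_top (ι : Type*) [Fintype ι] :
    (Nat.card {v : ι → V // Submodule.span F (Set.range v) = ⊤} : ℤ) =
      ∏ i ∈ Finset.range (finrank F V),
        ((Fintype.card F : ℤ) ^ Fintype.card ι - (Fintype.card F : ℤ) ^ i) := by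
  let b := finBasis F V
  let coords : (ι → V) ≃ (Fin (finrank F V) → ι → F) :=
    ((Equiv.refl ι).arrowCongr b.equivFun.toEquiv).trans (Equiv.piComm _)
  have hcoords (v : ι → V) :
      Submodule.span F (Set.range v) = ⊤ ↔ LinearIndependent F (coords v) :=
    span_range_eq_top_iff_linearIndependent_coords b v
  rw [Nat.card_congr (coords.subtypeEquiv (q := fun s ↦ LinearIndependent F s) hcoords),
    intCast_natCard_linearIndependent, finrank_fintype_fun_eq_card]

variable [Fintype (Submodule F V)] [DecidableEq (Submodule F V)]
  [LocallyFiniteOrder (Submodule F V)]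

/-- The characteristic polynomial of the lattice of subspaces of `V`, with a subspace `U`
contributing in degree `dim U`, so that the Möbius function is taken from `U` to the top. Its
coefficients are integers, which lets it be evaluated in any commutative ring. -/
noncomputable def subspaceCharPoly : Polynomial ℤ :=
  ∑ U : Submodule F V, Polynomial.C (IncidenceAlgebra.mu ℤ U ⊤) * Polynomial.X ^ finrank F U

theorem eval_card_pow_subspaceCharPoly (ι : Type*) [Fintype ι] :
    (subspaceCharPoly F V).eval ((Fintype.card F : ℤ) ^ Fintype.card ι) =
      Nat.card {v : ι → V // Submodule.span F (Set.range v) = ⊤} := by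
  have : Finite V := Module.finite_of_finite F
  rw [← sum_Iic_mu_mul_natCard_le, Finset.Iic_top]
  simp only [subspaceCharPoly, Polynomial.eval_finsetSum, Polynomial.eval_C_mul,
    Polynomial.eval_pow, Polynomial.eval_X, natCard_span_range_le, Nat.cast_pow]

theorem subspaceCharPoly_eq_prod :
    subspaceCharPoly F V = ∏ i ∈ Finset.range (finrank F V),
      (Polynomial.X - Polynomial.C ((Fintype.card F : ℤ) ^ i)) := by
  have hinj : Function.Injective fun m : ℕ ↦ (Fintype.card F : ℤ) ^ m :=
    Int.pow_right_injective (by simpa using Fintype.one_lt_card (α := F))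
  refine polynomial_eq_of_forall_eval_pow_eq hinj fun m ↦ ?_
  calc
    _ = (Nat.card {v : Fin m → V // Submodule.span F (Set.range v) = ⊤} : ℤ) := by
      rw [← eval_card_pow_subspaceCharPoly, Fintype.card_fin]
    _ = ∏ i ∈ Finset.range (finrank F V),
          ((Fintype.card F : ℤ) ^ m - (Fintype.card F : ℤ) ^ i) := by
      rw [intCast_natCard_span_range_eq_top, Fintype.card_fin]
    _ = _ := by
      simp only [Polynomial.eval_prod, Polynomial.eval_sub, Polynomial.eval_X, Polynomial.eval_C]

theorem subspace_lattice_char_poly_general {R : Type*} [CommRing R] (t : R) :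
    ∑ U : Submodule F V, ((IncidenceAlgebra.mu ℤ U ⊤ : ℤ) : R) * t ^ finrank F U =
      ∏ i ∈ Finset.range (finrank F V), (t - (Fintype.card F : R) ^ i) := by
  simpa [subspaceCharPoly] using
    congrArg (Polynomial.aeval t) (subspaceCharPoly_eq_prod F V)

end FiniteField

/-- For an `n`-dimensional vector space `V` over the finite field `F = 𝔽_q` (`q` a prime
power), a field `K` of characteristic zero and `t ∈ K`, the characteristic polynomial of
the subspace lattice factorizes:
`∑_{U ≤ V} μ(U, ⊤) · t ^ (dim U) = ∏_{i = 0}^{n-1} (t - q^i)`. -/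
theorem subspace_lattice_char_poly (q : ℕ) (hq : IsPrimePow q)
    (F : Type*) [Field F] [Fintype F] (hFq : Fintype.card F = q)
    (V : Type*) [AddCommGroup V] [Module F V] [FiniteDimensional F V]
    (n : ℕ) (hV : finrank F V = n)
    [Fintype (Submodule F V)] [DecidableEq (Submodule F V)]
    [LocallyFiniteOrder (Submodule F V)]
    (K : Type*) [Field K] [CharZero K] (t : K) :
    ∑ U : Submodule F V,
        ((IncidenceAlgebra.mu ℤ U (⊤ : Submodule F V) : ℤ) : K) * t ^ finrank F U =
      ∏ i ∈ Finset.range n, (t - (q : K) ^ i) := by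
  subst hFq hV
  exact subspace_lattice_char_poly_general F V t
end

section
/- Let p be a prime, G a finite abelian p-group, K a field of characteristic zero, and t ∈ K with t ≠ 0 and t ≠ p^i (cast into K) for every natural number i. Then the matrix, indexed by pairs of subgroups (A, B) of G, with (A,B)-entry t^{ℓ(A ⊓ B)} where ℓ(H) is the natural number with Nat.card H = p^{ℓ(H)}, has nonzero determinant. -/
/-!
Möbius inversion over a finite meet-semilattice factors a matrix `f (a ⊓ b)` as `Z * D * Zᵀ` with
`Z` unitriangular and `D` the diagonal of the Möbius transform of `f`. For `f A = t ^ ℓ(A)` on the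
subgroups of a `p`-group, the transform is Philip Hall's Eulerian function `e` with `|A| ^ n`
replaced by `t ^ ℓ(A)`. If `π : A → B` is surjective with kernel `N` of order `p`, the values
`e C` over the subgroups `C` with `π C = B` add up to `t * e B`. Such a `C` is either `A` itself or
a complement of `N`, hence isomorphic to `B`, so `e A = (t - c) * e B` with `c` the number of
complements. When `N` is central, `c` is `0` or `|Hom(B, N)|`, a power of `p`; by induction
`e A` is a product of factors `t` and `t - p ^ i`.
-/

section MobiusTransform

open scoped Matrix

variable {L L' R : Type*} [PartialOrder L] [Fintype L] [PartialOrder L'] [Fintype L'] [CommRing R]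

variable (L R) in
open Classical in
/-- The zeta function of a finite poset as a matrix, with rows indexed by the larger element. -/
noncomputable def zetaMatrix : Matrix L L R := Matrix.of fun a c => if c ≤ a then 1 else 0

open Classical in
/-- The Möbius transform of `f`: the function whose sums over the lower sets `{c | c ≤ a}` are the
values `f a`. It is obtained by inverting the zeta matrix. -/
noncomputable def mobiusTransform (f : L → R) : L → R := (zetaMatrix L R)⁻¹ *ᵥ f

open Classical in
theorem zetaMatrix_mulVec_apply (g : L → R) (a : L) :
    (zetaMatrix L R *ᵥ g) a = ∑ c with c ≤ a, g c := by
  simp [zetaMatrix, Matrix.mulVec, dotProduct, Finset.sum_filter]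

theorem det_zetaMatrix [DecidableEq L] : (zetaMatrix L R).det = 1 := by
  let e : LinearExtension L ≃ L := Equiv.refl L
  let _ : Fintype (LinearExtension L) := Fintype.ofEquiv L e.symm
  have lower : ((zetaMatrix L R).submatrix e e).IsLowerTriangular := fun a c hac =>
    if_neg fun hca : e c ≤ e a =>
      (show c ≤ a from (toLinearExtension (α := L)).monotone hca).not_gt hac
  rw [← Matrix.det_submatrix_equiv_self e, Matrix.det_of_isLowerTriangular _ lower]
  simp [zetaMatrix]

open Classical in
theorem sum_mobiusTransform (f : L → R) (a : L) :
    ∑ c with c ≤ a, mobiusTransform f c = f a := by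
  rw [← zetaMatrix_mulVec_apply, mobiusTransform, Matrix.mulVec_mulVec,
    Matrix.mul_nonsing_inv _ (by simp [det_zetaMatrix]), Matrix.one_mulVec]

open Classical in
theorem eq_mobiusTransform {f g : L → R} (h : ∀ a, ∑ c with c ≤ a, g c = f a) :
    g = mobiusTransform f := by
  rw [← funext h, mobiusTransform, ← funext (zetaMatrix_mulVec_apply g), Matrix.mulVec_mulVec,
    Matrix.nonsing_inv_mul _ (by simp [det_zetaMatrix]), Matrix.one_mulVec]

theorem mobiusTransform_const_mul (r : R) (f : L → R) (a : L) :
    mobiusTransform (fun c => r * f c) a = r * mobiusTransform f a := by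
  classical exact congrFun (Matrix.mulVec_smul (zetaMatrix L R)⁻¹ r f) a

theorem mobiusTransform_comp_of_isLowerSet_range (ι : L' ↪o L) (hι : IsLowerSet (Set.range ι))
    (f : L → R) : mobiusTransform (f ∘ ι) = mobiusTransform f ∘ ι := by
  classical
  refine (eq_mobiusTransform fun a => ?_).symm
  rw [Function.comp_apply, ← sum_mobiusTransform f]
  refine Finset.sum_bij (fun c _ => ι c) (by simp) (by simp) (fun d hd => ?_) (by simp)
  obtain ⟨c, rfl⟩ := hι (Finset.mem_filter.mp hd).2 ⟨a, rfl⟩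
  exact ⟨c, by simpa using hd, rfl⟩

open Classical in
theorem sum_mobiusTransform_fiber_of_gc {l : L → L'} {u : L' → L} (gc : GaloisConnection l u)
    (f : L → R) (b : L') :
    ∑ c with l c = b, mobiusTransform f c = mobiusTransform (f ∘ u) b := by
  refine congrFun (eq_mobiusTransform (g := fun b => ∑ c with l c = b, mobiusTransform f c)
    fun b => ?_) b
  rw [Function.comp_apply, ← sum_mobiusTransform f]
  simp only [← gc _ _]
  rw [← Finset.sum_fiberwise_of_maps_to (t := {d | d ≤ b}) (g := l) (by simp)]
  refine Finset.sum_congr rfl fun d hd => Finset.sum_congr ?_ fun _ _ => rfl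
  ext c
  simp only [Finset.mem_filter, Finset.mem_univ, true_and]
  exact ⟨fun h => ⟨h.trans_le (by simpa using hd), h⟩, And.right⟩

theorem det_matrix_of_inf {L : Type*} [SemilatticeInf L] [Fintype L] [DecidableEq L] (f : L → R) :
    (Matrix.of fun a b : L => f (a ⊓ b)).det = ∏ c, mobiusTransform f c := by
  classical
  have factorization : (Matrix.of fun a b : L => f (a ⊓ b)) =
      zetaMatrix L R * Matrix.diagonal (mobiusTransform f) * (zetaMatrix L R)ᵀ := by
    ext a b
    rw [Matrix.of_apply, Matrix.mul_apply, ← sum_mobiusTransform f, Finset.sum_filter]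
    refine Finset.sum_congr rfl fun c _ => ?_
    by_cases ha : c ≤ a <;> by_cases hb : c ≤ b <;> simp [zetaMatrix, ha, hb]
  simp [factorization, det_zetaMatrix]

end MobiusTransform

section Complements

variable {A B : Type*} [Group A] [Group B] {π : A →* B} {C : Subgroup A}

/-- The homomorphic sections of `π`. -/
abbrev HomSection (π : A →* B) : Type _ := {s : B →* A // Function.RightInverse s π}

theorem bijective_domRestrict_of_isCompl_ker (hπ : Function.Surjective π) (hC : IsCompl C π.ker) :
    Function.Bijective (π.domRestrict C) := by
  constructor
  · rw [← MonoidHom.ker_eq_bot_iff, MonoidHom.ker_domRestrict, Subgroup.subgroupOf_eq_bot]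
    exact hC.disjoint.symm
  · rw [← MonoidHom.range_eq_top, MonoidHom.domRestrict_range,
      Subgroup.map_eq_range_iff.mpr hC.codisjoint, MonoidHom.range_eq_top.mpr hπ]

theorem isCompl_range_ker (s : HomSection π) : IsCompl s.1.range π.ker := by
  refine ⟨Subgroup.disjoint_def.mpr ?_, Subgroup.map_eq_range_iff.mp ?_⟩
  · rintro _ ⟨b, rfl⟩ hb
    rw [← s.2 b, MonoidHom.mem_ker.mp hb, map_one]
  · rw [MonoidHom.range_eq_top.mpr s.2.surjective, MonoidHom.map_range,
      MonoidHom.range_eq_top]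
    exact fun b => ⟨b, s.2 b⟩

theorem card_isCompl_ker (hπ : Function.Surjective π) :
    Nat.card {C : Subgroup A // IsCompl C π.ker} = Nat.card (HomSection π) := by
  refine (Nat.card_congr (Equiv.ofBijective (fun s => ⟨s.1.range, isCompl_range_ker s⟩)
    ⟨fun s s' h => ?_, fun ⟨C, hC⟩ => ?_⟩)).symm
  · ext b
    obtain ⟨b', hb'⟩ : s.1 b ∈ s'.1.range := (congrArg Subtype.val h).le ⟨b, rfl⟩
    have : b' = b := by rw [← s'.2 b', hb', s.2 b]
    rw [← hb', this]
  · let e := MulEquiv.ofBijective _ (bijective_domRestrict_of_isCompl_ker hπ hC)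
    have hs : Function.RightInverse (C.subtype.comp e.symm.toMonoidHom) π := e.apply_symm_apply
    refine ⟨⟨_, hs⟩, Subtype.ext ?_⟩
    change (C.subtype.comp e.symm.toMonoidHom).range = C
    rw [MonoidHom.range_comp, MonoidHom.range_eq_top.mpr e.symm.surjective,
      ← MonoidHom.range_eq_map, C.range_subtype]

theorem map_eq_top_iff_of_prime_card_ker (hπ : Function.Surjective π)
    (hker : (Nat.card π.ker).Prime) : C.map π = ⊤ ↔ C = ⊤ ∨ IsCompl C π.ker := by
  rw [← MonoidHom.range_eq_top.mpr hπ, Subgroup.map_eq_range_iff]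
  refine ⟨fun hC => ?_, ?_⟩
  · have := Fact.mk hker
    rcases (C.subgroupOf π.ker).eq_bot_or_eq_top_of_prime_card with h | h
    · exact .inr ⟨Subgroup.subgroupOf_eq_bot.mp h, hC⟩
    · exact .inl (by rwa [codisjoint_iff, sup_eq_left.mpr (Subgroup.subgroupOf_eq_top.mp h)] at hC)
  · rintro (rfl | hC)
    exacts [codisjoint_top_left, hC.codisjoint]

theorem card_comap_of_surjective (hπ : Function.Surjective π) (D : Subgroup B) :
    Nat.card (D.comap π) = Nat.card π.ker * Nat.card D := by
  have h := Subgroup.relIndex_mul_relIndex ⊥ π.ker (D.comap π) bot_le (Subgroup.ker_le_comap π D)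
  rw [Subgroup.relIndex_bot_left, Subgroup.relIndex_bot_left, Subgroup.relIndex_ker,
    Subgroup.map_comap_eq_self_of_surjective hπ] at h
  exact h.symm

/-- A section of a central extension identifies all sections with homomorphisms to the kernel. -/
def homSectionEquiv (hπ : π.ker ≤ Subgroup.center A) (s₀ : HomSection π) :
    HomSection π ≃ (B →* π.ker) where
  toFun s := MonoidHom.mk'
    (fun b => ⟨s.1 b * (s₀.1 b)⁻¹, by simp [MonoidHom.mem_ker, s.2 b, s₀.2 b]⟩) fun b b' => by
      have central : s.1 b' * (s₀.1 b')⁻¹ ∈ Subgroup.center A :=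
        hπ (by simp [MonoidHom.mem_ker, s.2 b', s₀.2 b'])
      ext
      simpa [mul_assoc] using (Subgroup.mem_center_iff.mp central (s₀.1 b)⁻¹).symm
  invFun f := ⟨MonoidHom.mk' (fun b => f b * s₀.1 b) fun b b' => by
      have comm := Subgroup.mem_center_iff.mp (hπ (f b').2) (s₀.1 b)
      simp only [map_mul, Subgroup.coe_mul]
      rw [mul_assoc, ← mul_assoc (f b' : A), ← comm, mul_assoc, mul_assoc],
    fun b => by simp [MonoidHom.mem_ker.mp (f b).2, s₀.2 b]⟩
  left_inv s := by ext b; simp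
  right_inv f := by ext b; simp

theorem isPGroup_monoidHom {p : ℕ} {N : Type*} [CommGroup N] [Finite N] [Fact p.Prime]
    (hN : IsPGroup p N) : IsPGroup p (B →* N) := by
  obtain ⟨k, hk⟩ := IsPGroup.iff_card.mp hN
  refine fun f => ⟨k, ?_⟩
  ext b
  rw [MonoidHom.pow_apply, ← hk, pow_card_eq_one', MonoidHom.one_apply]

open scoped IsMulCommutative in
theorem card_homSection_eq_zero_or_prime_pow {p : ℕ} [Fact p.Prime] [Finite B] [Finite π.ker]
    (hπ : π.ker ≤ Subgroup.center A) (hker : IsPGroup p π.ker) :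
    Nat.card (HomSection π) = 0 ∨ ∃ k, Nat.card (HomSection π) = p ^ k := by
  rcases isEmpty_or_nonempty (HomSection π) with _ | ⟨⟨s₀⟩⟩
  · exact .inl Nat.card_of_isEmpty
  · have : IsMulCommutative π.ker := Subgroup.le_centralizer_iff_isMulCommutative.mp
      (hπ.trans (Subgroup.center_le_centralizer _))
    have : Finite (B →* π.ker) := .of_injective _ DFunLike.coe_injective
    rw [Nat.card_congr (homSectionEquiv hπ s₀)]
    exact .inr (IsPGroup.iff_card.mp (isPGroup_monoidHom hker))

end Complements

section EulerianValue

variable {A B R : Type*} [Group A] [Group B] [CommRing R] {p : ℕ} {t : R}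

/-- Philip Hall's Eulerian function of the subgroups of `A`, with `t ^ ℓ(C)` in place of the number
`|C| ^ n` of `n`-tuples in `C`. On a finite `p`-group, its value at `t = p ^ n` is the number of
`n`-tuples generating the subgroup. -/
noncomputable def eulerianValue [Fintype (Subgroup A)] (p : ℕ) (t : R) : Subgroup A → R :=
  mobiusTransform fun C => t ^ (Nat.card C).factorization p

variable [Fintype (Subgroup A)] [Fintype (Subgroup B)]

theorem det_subgroup_intersection_matrix_eq_prod [DecidableEq (Subgroup A)] :
    (Matrix.of fun C D : Subgroup A =>
      t ^ (Nat.card (C ⊓ D : Subgroup A)).factorization p).det =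
      ∏ C : Subgroup A, eulerianValue p t C :=
  det_matrix_of_inf fun C : Subgroup A => t ^ (Nat.card C).factorization p

theorem eulerianValue_map_of_injective {φ : A →* B} (hφ : Function.Injective φ) (C : Subgroup A) :
    eulerianValue p t (C.map φ) = eulerianValue p t C := by
  have lower : IsLowerSet (Set.range (Subgroup.map φ)) := by
    rintro _ D hD ⟨C, rfl⟩
    exact ⟨D.comap φ, Subgroup.map_comap_eq_self (hD.trans (Subgroup.map_le_range φ C))⟩
  have h := mobiusTransform_comp_of_isLowerSet_range
    (OrderEmbedding.ofMapLEIff (Subgroup.map φ) fun _ _ => Subgroup.map_le_map_iff_of_injective hφ)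
    lower fun D => t ^ (Nat.card D).factorization p
  refine (congrFun h C).symm.trans ?_
  change mobiusTransform (fun D => t ^ (Nat.card (D.map φ)).factorization p) C = _
  simp only [Subgroup.card_map_of_injective hφ, eulerianValue]

theorem eulerianValue_top_of_subsingleton [Subsingleton A] :
    eulerianValue p t (⊤ : Subgroup A) = 1 := by
  classical
  have total : ∑ C : Subgroup A with C ≤ ⊤, eulerianValue p t C =
      t ^ (Nat.card (⊤ : Subgroup A)).factorization p := sum_mobiusTransform _ ⊤
  simpa [Subsingleton.elim default (⊤ : Subgroup A)] using total

theorem eulerianValue_coe_top (C : Subgroup A) [Fintype (Subgroup C)] :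
    eulerianValue p t (⊤ : Subgroup C) = eulerianValue p t C := by
  rw [← eulerianValue_map_of_injective C.subtype_injective, ← MonoidHom.range_eq_map,
    C.range_subtype]

theorem eulerianValue_map_of_injective_domRestrict {π : A →* B} {C : Subgroup A}
    (hπ : Function.Injective (π.domRestrict C)) :
    eulerianValue p t (C.map π) = eulerianValue p t C := by
  have : Finite (Subgroup C) := .of_injective _ (Subgroup.map_injective C.subtype_injective)
  have := Fintype.ofFinite (Subgroup C)
  rw [← MonoidHom.domRestrict_range, MonoidHom.range_eq_map, eulerianValue_map_of_injective hπ,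
    eulerianValue_coe_top]

open Classical in
theorem sum_eulerianValue_fiber_map [Finite A] {π : A →* B} (hπ : Function.Surjective π)
    (D : Subgroup B) :
    ∑ C : Subgroup A with C.map π = D, eulerianValue p t C =
      t ^ (Nat.card π.ker).factorization p * eulerianValue p t D := by
  have := Finite.of_surjective π hπ
  rw [eulerianValue, sum_mobiusTransform_fiber_of_gc (Subgroup.gc_map_comap π), eulerianValue,
    ← mobiusTransform_const_mul]
  congr 1
  ext D
  rw [Function.comp_apply, card_comap_of_surjective hπ,
    Nat.factorization_mul Nat.card_pos.ne' Nat.card_pos.ne', Finsupp.add_apply, pow_add]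

theorem eulerianValue_top_eq_sub_mul [hp : Fact p.Prime] [Finite A] {π : A →* B}
    (hπ : Function.Surjective π) (hker : Nat.card π.ker = p) :
    eulerianValue p t (⊤ : Subgroup A) =
      (t - Nat.card (HomSection π)) * eulerianValue p t (⊤ : Subgroup B) := by
  classical
  have complement_value (C : Subgroup A) (hC : IsCompl C π.ker) :
      eulerianValue p t C = eulerianValue p t (⊤ : Subgroup B) := by
    have bij := bijective_domRestrict_of_isCompl_ker hπ hC
    rw [← eulerianValue_map_of_injective_domRestrict bij.injective, ← MonoidHom.domRestrict_range,
      MonoidHom.range_eq_top.mpr bij.surjective]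
  have top_not_complement : (⊤ : Subgroup A) ∉ ({C | IsCompl C π.ker} : Finset (Subgroup A)) := by
    intro h
    have trivial_ker : π.ker = ⊥ := top_disjoint.mp (Finset.mem_filter.mp h).2.disjoint
    exact hp.out.ne_one (by rw [← hker, trivial_ker, Subgroup.card_bot])
  have fiber : ({C | C.map π = ⊤} : Finset (Subgroup A)) =
      insert ⊤ ({C | IsCompl C π.ker} : Finset (Subgroup A)) := by
    ext C
    simp [map_eq_top_iff_of_prime_card_ker hπ (hker ▸ hp.out)]
  have total := sum_eulerianValue_fiber_map (p := p) (t := t) hπ ⊤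
  rw [fiber, Finset.sum_insert top_not_complement,
    Finset.sum_congr rfl fun C hC => complement_value C (Finset.mem_filter.mp hC).2,
    Finset.sum_const, ← Fintype.card_subtype, ← Nat.card_eq_fintype_card, card_isCompl_ker hπ,
    hker, hp.out.factorization_self, pow_one, nsmul_eq_mul] at total
  linear_combination total

end EulerianValue

theorem normal_of_le_center {A : Type*} [Group A] {N : Subgroup A} (hN : N ≤ Subgroup.center A) :
    N.Normal :=
  ⟨fun n hn g => by rwa [Subgroup.mem_center_iff.mp (hN hn) g, mul_inv_cancel_right]⟩

theorem exists_le_center_card_eq_prime {p : ℕ} [Fact p.Prime] {A : Type*} [Group A] [Finite A]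
    [Nontrivial A] (hA : IsPGroup p A) : ∃ N ≤ Subgroup.center A, Nat.card N = p := by
  have := hA.center_nontrivial
  obtain ⟨z, hz⟩ := exists_prime_orderOf_dvd_card' p
    ((hA.to_subgroup (Subgroup.center A)).card_eq_or_dvd.resolve_left Finite.one_lt_card.ne')
  refine ⟨Subgroup.zpowers (z : A), Subgroup.zpowers_le.mpr z.2, ?_⟩
  rw [Nat.card_zpowers, Subgroup.orderOf_coe, hz]

theorem eulerianValue_top_mem {p : ℕ} [hp : Fact p.Prime] {A R : Type*} [Group A] [Finite A]
    [Fintype (Subgroup A)] (hA : IsPGroup p A) [CommRing R] {t : R} {S : Submonoid R}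
    (ht0 : t ∈ S) (ht : ∀ i : ℕ, t - (p : R) ^ i ∈ S) : eulerianValue p t (⊤ : Subgroup A) ∈ S := by
  induction hn : Nat.card A using Nat.strong_induction_on generalizing A with
  | _ n ih =>
    rcases subsingleton_or_nontrivial A with _ | _
    · rw [eulerianValue_top_of_subsingleton]
      exact one_mem S
    · obtain ⟨N, hNcenter, hN⟩ := exists_le_center_card_eq_prime hA
      have := normal_of_le_center hNcenter
      have := Fintype.ofFinite (Subgroup (A ⧸ N))
      have card_quotient_lt : Nat.card (A ⧸ N) < n := by
        rw [← hn, N.card_eq_card_quotient_mul_card_subgroup, hN]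
        exact lt_mul_of_one_lt_right Nat.card_pos hp.out.one_lt
      have hker : (QuotientGroup.mk' N).ker = N := QuotientGroup.ker_mk' N
      rw [eulerianValue_top_eq_sub_mul (QuotientGroup.mk'_surjective N) (by rw [hker, hN])]
      refine mul_mem ?_ (ih _ card_quotient_lt (hA.to_quotient N) rfl)
      rcases card_homSection_eq_zero_or_prime_pow (hker.trans_le hNcenter) (hA.to_subgroup _)
        with h | ⟨k, h⟩
      · simpa [h] using ht0
      · simpa [h] using ht k

/-- Membership in `S` expresses that the determinant is a product of factors `t` and `t - p ^ i`;
taking `S = nonZeroDivisors R` gives nonvanishing. -/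
theorem det_subgroup_intersection_matrix_ne_zero_general {p : ℕ} (hp : p.Prime)
    {G : Type*} [Group G] [Finite G] (hG : IsPGroup p G)
    [Fintype (Subgroup G)] [DecidableEq (Subgroup G)]
    {R : Type*} [CommRing R] {t : R} (S : Submonoid R)
    (ht0 : t ∈ S) (ht : ∀ i : ℕ, t - (p : R) ^ i ∈ S) :
    (Matrix.of fun A B : Subgroup G =>
      t ^ ((Nat.card (A ⊓ B : Subgroup G)).factorization p)).det ∈ S := by
  have := Fact.mk hp
  rw [det_subgroup_intersection_matrix_eq_prod]
  refine prod_mem fun C _ => ?_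
  have := Fintype.ofFinite (Subgroup C)
  rw [← eulerianValue_coe_top]
  exact eulerianValue_top_mem (hG.to_subgroup C) ht0 ht

/-- For a finite abelian `p`-group `G`, a field `K` of characteristic zero and `t ∈ K`
with `t ≠ 0` and `t ≠ p^i` for every `i`, the matrix indexed by pairs of subgroups of
`G` with `(A, B)`-entry `t ^ ℓ(A ⊓ B)`, where `ℓ(H)` is defined by
`Nat.card H = p ^ ℓ(H)`, has nonzero determinant. -/
theorem det_subgroup_intersection_matrix_ne_zero (p : ℕ) (hp : p.Prime)
    (G : Type*) [CommGroup G] [Finite G] (hG : IsPGroup p G)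
    [Fintype (Subgroup G)] [DecidableEq (Subgroup G)]
    (K : Type*) [Field K] [CharZero K] (t : K)
    (ht0 : t ≠ 0) (ht : ∀ i : ℕ, t ≠ (p : K) ^ i) :
    (Matrix.of fun A B : Subgroup G =>
      t ^ ((Nat.card (A ⊓ B : Subgroup G)).factorization p)).det ≠ 0 :=
  nonZeroDivisors.ne_zero <| det_subgroup_intersection_matrix_ne_zero_general hp hG
    (nonZeroDivisors K) (mem_nonZeroDivisors_of_ne_zero ht0) fun i =>
      mem_nonZeroDivisors_of_ne_zero (sub_ne_zero.mpr (ht i))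
end
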